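/- Let u ≥ 4 and d ≥ 0 be integers, q = u−1 and p = u−2. Then Σ_{a+b=u, a≥2, b≥1} (b−1)·ζ(a,b,1_d) = (p−1)·ζ(u,1_d) − ζ(2,p,1_d) + p(d+1)·ζ(q,1_{d+1}) + Σ_{j=0}^{d−1} [ p·ζ(q,1_j,2,1_{d−1−j}) − ζ(p,1_j,3,1_{d−1−j}) + (d−j)·ζ(p,1_j,2,1_{d−j}) ]. -/

import Mathlib

/-- The multiple zeta value `ζ(s₁,…,s_d) = Σ_{k₁>⋯>k_d≥1} 1/(k₁^{s₁}⋯k_d^{s_d})`. -/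
noncomputable def mzv {d : ℕ} (s : Fin d → ℕ) : ℝ :=
  ∑' k : {k : Fin d → ℕ // StrictAnti k ∧ ∀ i, 0 < k i},
    ∏ i, (1 : ℝ) / (k.1 i : ℝ) ^ s i

/-- Truncated nested sums. -/
noncomputable def ZZ : ℕ → (ℕ → ℕ) → ℕ → ℝ
  | 0, _, _ => 1
  | d + 1, s, n => ∑ k ∈ Finset.range n, ((k : ℝ)⁻¹) ^ (s 0) * ZZ d (fun i => s (i + 1)) k

lemma ZZ_zero (s : ℕ → ℕ) (n : ℕ) : ZZ 0 s n = 1 := rfl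

lemma ZZ_def (d : ℕ) (s : ℕ → ℕ) (n : ℕ) : ZZ (d + 1) s n =
    ∑ k ∈ Finset.range n, ((k : ℝ)⁻¹) ^ (s 0) * ZZ d (fun i => s (i + 1)) k := rfl

lemma ZZ_at_zero (d : ℕ) (s : ℕ → ℕ) : ZZ (d + 1) s 0 = 0 := by simp [ZZ_def]

lemma ZZ_succ (d : ℕ) (s : ℕ → ℕ) (n : ℕ) : ZZ (d + 1) s (n + 1) =
    ZZ (d + 1) s n + ((n : ℝ)⁻¹) ^ (s 0) * ZZ d (fun i => s (i + 1)) n := by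
  rw [ZZ_def, Finset.sum_range_succ, ← ZZ_def]

lemma ZZ_nonneg (d : ℕ) : ∀ (s : ℕ → ℕ) (n : ℕ), 0 ≤ ZZ d s n := by
  induction d with
  | zero => intro s n; simp [ZZ_zero]
  | succ d ih => intro s n; rw [ZZ_def]; exact Finset.sum_nonneg fun k _ => mul_nonneg (by positivity) (ih _ _)

def CC {d : ℕ} (N : ℕ) (k : Fin d → ℕ) : Prop := (StrictAnti k ∧ ∀ i, 0 < k i) ∧ ∀ i, k i < N

lemma strictAnti_cons {d : ℕ} (n : ℕ) (k : Fin d → ℕ) :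
    (StrictAnti (Fin.cons n k : Fin (d + 1) → ℕ) ∧ ∀ i, 0 < (Fin.cons n k : Fin (d + 1) → ℕ) i) ↔
      0 < n ∧ CC n k := by
  constructor
  · rintro ⟨h1, h2⟩
    refine ⟨by simpa using h2 0, ⟨?_, fun i => by simpa using h2 i.succ⟩, fun i => ?_⟩
    · intro i j hij
      simpa using h1 (Fin.succ_lt_succ_iff.mpr hij)
    · simpa using h1 (Fin.succ_pos i)
  · rintro ⟨h0, ⟨h1, h2⟩, h3⟩
    constructor
    · intro i j hij
      induction i using Fin.cases with
      | zero =>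
        induction j using Fin.cases with
        | zero => exact absurd hij (lt_irrefl _)
        | succ j => simpa using h3 j
      | succ i =>
        induction j using Fin.cases with
        | zero => exact absurd hij (by simp)
        | succ j => simpa using h1 (Fin.succ_lt_succ_iff.mp hij)
    · intro i
      induction i using Fin.cases with
      | zero => simpa using h0
      | succ i => simpa using h2 i

lemma CC_cons {d : ℕ} (N n : ℕ) (k : Fin d → ℕ) :
    CC N (Fin.cons n k : Fin (d + 1) → ℕ) ↔ n < N ∧ 0 < n ∧ CC n k := by
  rw [CC, strictAnti_cons]
  constructor
  · rintro ⟨⟨h0, h1⟩, h2⟩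
    exact ⟨by simpa using h2 0, h0, h1⟩
  · rintro ⟨h, h0, h1⟩
    refine ⟨⟨h0, h1⟩, fun i => ?_⟩
    induction i using Fin.cases with
    | zero => simpa using h
    | succ i => simpa using (h1.2 i).trans h

lemma tsum_cons {d : ℕ} (f : (Fin (d + 1) → ℕ) → ENNReal) :
    ∑' k, f k = ∑' n : ℕ, ∑' k : Fin d → ℕ, f (Fin.cons n k) := by
  rw [← (Fin.consEquiv (fun _ : Fin (d + 1) => ℕ)).tsum_eq]
  exact ENNReal.tsum_prod (f := fun (n : ℕ) (k : Fin d → ℕ) => f (Fin.cons n k))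

open Classical in
lemma tsum_CC (d : ℕ) : ∀ (s : ℕ → ℕ) (_ : ∀ i, 1 ≤ s i) (N : ℕ),
    ∑' k : Fin d → ℕ, (if CC N k then ENNReal.ofReal (∏ i, ((k i : ℝ)⁻¹) ^ s i) else 0)
      = ENNReal.ofReal (ZZ d s N) := by
  induction d with
  | zero =>
    intro s hs N
    rw [tsum_eq_single (default : Fin 0 → ℕ) (fun b hb => absurd (Subsingleton.elim _ _) hb)]
    have : CC N (default : Fin 0 → ℕ) := ⟨⟨fun i => i.elim0, fun i => i.elim0⟩, fun i => i.elim0⟩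
    rw [if_pos this]; simp [ZZ_zero]
  | succ d ih =>
    intro s hs N
    rw [tsum_cons]
    have key : ∀ n : ℕ, (∑' k : Fin d → ℕ, (if CC N (Fin.cons n k : Fin (d + 1) → ℕ) then ENNReal.ofReal (∏ i, ((((Fin.cons n k : Fin (d + 1) → ℕ) i : ℕ) : ℝ)⁻¹) ^ s i) else 0)) = if n < N then ENNReal.ofReal (((n : ℝ)⁻¹) ^ (s 0) * ZZ d (fun i => s (i + 1)) n) else 0 := by
      intro n
      rw [ENNReal.ofReal_mul (by positivity), ← ih (fun i => s (i + 1)) (fun i => hs _) n, ← ENNReal.tsum_mul_left]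
      by_cases hN : n < N
      · rw [if_pos hN]
        refine tsum_congr fun k => ?_
        simp only [CC_cons, Fin.prod_univ_succ, Fin.cons_zero, Fin.cons_succ, Fin.val_zero, Fin.val_succ]
        rcases Nat.eq_zero_or_pos n with h0 | h0
        · subst h0
          simp [show s 0 ≠ 0 by have := hs 0; omega]
        · by_cases hC : CC n k
          · simp [hN, h0, hC, ENNReal.ofReal_mul]
          · simp [hC]
      · rw [if_neg hN]
        simp [CC_cons, hN]
    simp_rw [key]
    rw [ZZ_def, ENNReal.ofReal_sum_of_nonneg (fun k _ => mul_nonneg (by positivity) (ZZ_nonneg _ _ _)),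
      tsum_eq_sum (s := Finset.range N) (fun b hb => by simp at hb; simp [hb])]
    exact Finset.sum_congr rfl fun k hk => by simp at hk; simp [hk]

open Classical in
lemma mzv_eq (d : ℕ) (s : ℕ → ℕ) (hs : ∀ i, 1 ≤ s i) :
    mzv (fun i : Fin (d + 1) => s i) =
      ∑' n : ℕ, ((n : ℝ)⁻¹) ^ (s 0) * ZZ d (fun i => s (i + 1)) n := by
  have h1 : (∑' k : {k : Fin (d + 1) → ℕ // StrictAnti k ∧ ∀ i, 0 < k i},
      ENNReal.ofReal (∏ i, ((k.1 i : ℝ)⁻¹) ^ s i)) =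
      ∑' n : ℕ, ENNReal.ofReal (((n : ℝ)⁻¹) ^ (s 0) * ZZ d (fun i => s (i + 1)) n) := by
    have h2 := tsum_subtype {k : Fin (d + 1) → ℕ | StrictAnti k ∧ ∀ i, 0 < k i}
      (fun k => ENNReal.ofReal (∏ i, ((k i : ℝ)⁻¹) ^ s i))
    refine h2.trans ?_
    rw [tsum_cons]
    refine tsum_congr fun n => ?_
    rw [ENNReal.ofReal_mul (by positivity), ← tsum_CC d (fun i => s (i + 1)) (fun i => hs _) n, ← ENNReal.tsum_mul_left]
    refine tsum_congr fun k => ?_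
    simp only [Set.indicator_apply, Set.mem_ofPred_eq, strictAnti_cons, Fin.prod_univ_succ, Fin.cons_zero, Fin.cons_succ, Fin.val_zero, Fin.val_succ]
    rcases Nat.eq_zero_or_pos n with h0 | h0
    · subst h0
      simp [show s 0 ≠ 0 by have := hs 0; omega]
    · by_cases hC : CC n k
      · simp [h0, hC, ENNReal.ofReal_mul]
      · simp [hC]
  have h3 := congrArg ENNReal.toReal h1
  rw [ENNReal.tsum_toReal_eq (fun _ => ENNReal.ofReal_ne_top), ENNReal.tsum_toReal_eq (fun _ => ENNReal.ofReal_ne_top)] at h3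
  rw [mzv]
  convert h3 using 1
  · refine tsum_congr fun k => ?_
    rw [ENNReal.toReal_ofReal (Finset.prod_nonneg fun i _ => by positivity)]
    exact Finset.prod_congr rfl fun i _ => by simp
  · refine tsum_congr fun k => ?_
    rw [ENNReal.toReal_ofReal (mul_nonneg (by positivity) (ZZ_nonneg _ _ _))]

/-! Summability -/

lemma ZZ_le (d : ℕ) : ∀ (s : ℕ → ℕ) (_ : ∀ i, 1 ≤ s i) (n : ℕ),
    ZZ d s n ≤ (∑ k ∈ Finset.range n, ((k : ℝ)⁻¹)) ^ d := by
  induction d with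
  | zero => intro s hs n; simp [ZZ_zero]
  | succ d ih =>
    intro s hs n
    rw [ZZ_def, pow_succ', Finset.sum_mul]
    refine Finset.sum_le_sum fun k hk => ?_
    have hk1 : ((k : ℝ)⁻¹) ^ s 0 ≤ (k : ℝ)⁻¹ := by
      refine pow_le_of_le_one (by positivity) ?_ (by have := hs 0; omega)
      rcases Nat.eq_zero_or_pos k with h | h
      · simp [h]
      · exact inv_le_one_of_one_le₀ (by exact_mod_cast h)
    refine mul_le_mul hk1 ((ih _ (fun i => hs _) k).trans ?_) (ZZ_nonneg _ _ _) (by positivity)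
    refine pow_le_pow_left₀ (Finset.sum_nonneg fun _ _ => by positivity) ?_ _
    refine Finset.sum_le_sum_of_subset_of_nonneg ?_ (fun _ _ _ => by positivity)
    exact Finset.range_subset_range.mpr (by simp at hk; omega)

lemma harm_le (n : ℕ) : (∑ k ∈ Finset.range n, ((k : ℝ)⁻¹)) ≤ 1 + Real.log n := by
  rcases n with _ | n
  · simp
  have h := harmonic_le_one_add_log n
  have h2 : (∑ k ∈ Finset.range (n + 1), ((k : ℝ)⁻¹)) = (harmonic n : ℝ) := by
    rw [Finset.sum_range_succ', harmonic]; push_cast; simp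
  rw [h2]
  refine h.trans ?_
  rcases Nat.eq_zero_or_pos n with h0 | h0
  · simp [h0]
  · gcongr; simp

lemma summ (a d : ℕ) (ha : 2 ≤ a) (s : ℕ → ℕ) (hs : ∀ i, 1 ≤ s i) :
    Summable fun n : ℕ => ((n : ℝ)⁻¹) ^ a * ZZ d s n := by
  have hO : (fun n : ℕ => (1 + Real.log (n : ℝ)) ^ d) =O[Filter.atTop] fun n : ℕ => (n : ℝ) ^ (1 / 2 : ℝ) := by
    have h1 : (fun x : ℝ => (1 + Real.log x) ^ d) =O[Filter.atTop] fun x : ℝ => x ^ (1 / 2 : ℝ) := by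
      have h2 : (fun x : ℝ => (1 + Real.log x)) =O[Filter.atTop] fun x : ℝ => x ^ (1 / (2 * (d + 1)) : ℝ) := by
        have hp : (0 : ℝ) < 1 / (2 * (d + 1)) := by positivity
        refine Asymptotics.IsBigO.add ?_ (isLittleO_log_rpow_atTop hp).isBigO
        exact ((Asymptotics.isLittleO_const_left.mpr (Or.inr (tendsto_norm_atTop_atTop.comp (tendsto_rpow_atTop hp))))).isBigO
      refine (h2.pow d).trans ?_
      refine Asymptotics.IsBigO.of_bound 1 ?_
      filter_upwards [Filter.eventually_ge_atTop 1] with x hx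
      rw [← Real.rpow_natCast, ← Real.rpow_mul (by linarith), one_mul, Real.norm_of_nonneg (by positivity), Real.norm_of_nonneg (by positivity)]
      refine Real.rpow_le_rpow_of_exponent_le hx ?_
      rw [one_div_mul_eq_div, div_le_div_iff₀ (by positivity) (by positivity)]
      nlinarith
    exact h1.comp_tendsto tendsto_natCast_atTop_atTop
  have hs2 : Summable fun n : ℕ => (n : ℝ) ^ (-(3 / 2) : ℝ) := Real.summable_nat_rpow.mpr (by norm_num)
  refine summable_of_isBigO_nat hs2 ?_
  have h3 : (fun n : ℕ => ((n : ℝ)⁻¹) ^ 2 * (1 + Real.log (n : ℝ)) ^ d) =O[Filter.atTop] fun n : ℕ => (n : ℝ) ^ (-(3 / 2) : ℝ) := by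
    refine ((Asymptotics.isBigO_refl (fun n : ℕ => ((n : ℝ)⁻¹) ^ 2) Filter.atTop).mul hO).trans ?_
    refine Asymptotics.IsBigO.of_bound 1 ?_
    filter_upwards [Filter.eventually_ge_atTop 1] with n hn
    have hn' : (0 : ℝ) < n := by exact_mod_cast hn
    rw [one_mul, Real.norm_of_nonneg (by positivity), Real.norm_of_nonneg (by positivity), ← Real.rpow_natCast, ← Real.rpow_neg_one, ← Real.rpow_mul hn'.le, ← Real.rpow_add hn']
    norm_num
  refine Asymptotics.IsBigO.trans (Asymptotics.IsBigO.of_bound 1 ?_) h3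
  filter_upwards [Filter.eventually_ge_atTop 1] with n hn
  have hl : 0 ≤ Real.log n := Real.log_natCast_nonneg n
  rw [one_mul, Real.norm_of_nonneg (mul_nonneg (by positivity) (ZZ_nonneg _ _ _)), Real.norm_of_nonneg (by positivity)]
  refine mul_le_mul ?_ ((ZZ_le d s hs n).trans ?_) (ZZ_nonneg _ _ _) (by positivity)
  · refine pow_le_pow_of_le_one (by positivity) (inv_le_one_of_one_le₀ (by exact_mod_cast hn)) ha
  · exact pow_le_pow_left₀ (Finset.sum_nonneg fun _ _ => by positivity) (harm_le n) _

lemma mzv_hasSum (d : ℕ) (s : ℕ → ℕ) (hs : ∀ i, 1 ≤ s i) (h0 : 2 ≤ s 0) :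
    HasSum (fun n : ℕ => ((n : ℝ)⁻¹) ^ (s 0) * ZZ d (fun i => s (i + 1)) n)
      (mzv (fun i : Fin (d + 1) => s i)) := by
  rw [mzv_eq d s hs]
  exact (summ _ d h0 _ (fun i => hs _)).hasSum

/-! Finite identities -/

noncomputable def TT (d n : ℕ) : ℝ := ZZ d (fun _ => 1) n
noncomputable def EE (s d j n : ℕ) : ℝ := ZZ (d + 1) (fun i => if i = j then s else 1) n
noncomputable def HH (s n : ℕ) : ℝ := ∑ k ∈ Finset.range n, ((k : ℝ)⁻¹) ^ s
noncomputable def XX (s d n : ℕ) : ℝ := ∑ j ∈ Finset.range (d + 1), EE s d j n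
noncomputable def WW (d n : ℕ) : ℝ := ∑ j ∈ Finset.range (d + 1), ((d : ℝ) + 1 - j) * EE 2 d j n

lemma TT_zero (n : ℕ) : TT 0 n = 1 := rfl
lemma TT_nonneg (d n : ℕ) : 0 ≤ TT d n := ZZ_nonneg _ _ _
lemma TT_succ (d n : ℕ) : TT (d + 1) (n + 1) = TT (d + 1) n + (n : ℝ)⁻¹ * TT d n := by
  rw [TT, ZZ_succ, pow_one]; rfl
lemma TT_at_zero (d : ℕ) : TT (d + 1) 0 = 0 := ZZ_at_zero _ _
lemma TT_at_one (d : ℕ) : TT (d + 1) 1 = 0 := by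
  have := TT_succ d 0; simpa [TT_at_zero] using this
lemma HH_succ (s n : ℕ) : HH s (n + 1) = HH s n + ((n : ℝ)⁻¹) ^ s := by
  rw [HH, Finset.sum_range_succ]; rfl
lemma EE_at_zero (s d j : ℕ) : EE s d j 0 = 0 := ZZ_at_zero _ _
lemma EE_succ_zero (s d n : ℕ) : EE s d 0 (n + 1) = EE s d 0 n + ((n : ℝ)⁻¹) ^ s * TT d n := by
  rw [EE, ZZ_succ]; simp [EE, TT]
lemma EE_succ_succ (s d j n : ℕ) :
    EE s (d + 1) (j + 1) (n + 1) = EE s (d + 1) (j + 1) n + (n : ℝ)⁻¹ * EE s d j n := by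
  rw [EE, ZZ_succ]; simp [EE]
lemma EE_one (d j n : ℕ) : EE 1 d j n = TT (d + 1) n := by simp [EE, TT]

lemma XX_at_zero (s d : ℕ) : XX s d 0 = 0 := by simp [XX, EE_at_zero]
lemma XX_zero_succ (s n : ℕ) : XX s 0 (n + 1) = XX s 0 n + ((n : ℝ)⁻¹) ^ s := by
  simp [XX, EE_succ_zero, TT_zero]
lemma XX_succ (s d n : ℕ) : XX s (d + 1) (n + 1) =
    XX s (d + 1) n + ((n : ℝ)⁻¹) ^ s * TT (d + 1) n + (n : ℝ)⁻¹ * XX s d n := by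
  rw [XX, XX, Finset.sum_range_succ', Finset.sum_range_succ' (n := d + 1), EE_succ_zero]
  simp only [EE_succ_succ]
  rw [Finset.sum_add_distrib, ← Finset.mul_sum, XX]; ring

lemma WW_at_zero (d : ℕ) : WW d 0 = 0 := by simp [WW, EE_at_zero]
lemma WW_zero_succ (n : ℕ) : WW 0 (n + 1) = WW 0 n + ((n : ℝ)⁻¹) ^ 2 := by
  simp [WW, EE_succ_zero, TT_zero]
lemma WW_succ (d n : ℕ) : WW (d + 1) (n + 1) =
    WW (d + 1) n + ((d : ℝ) + 2) * ((n : ℝ)⁻¹) ^ 2 * TT (d + 1) n + (n : ℝ)⁻¹ * WW d n := by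
  rw [WW, WW, Finset.sum_range_succ', Finset.sum_range_succ' (n := d + 1), EE_succ_zero]
  simp only [EE_succ_succ, mul_add]
  rw [Finset.sum_add_distrib, WW, Finset.mul_sum]
  have : ∀ j ∈ Finset.range (d + 1), ((((d + 1 : ℕ) : ℝ) + 1 - ((j + 1 : ℕ) : ℝ)) * ((n : ℝ)⁻¹ * EE 2 d j n)) = (n : ℝ)⁻¹ * (((d : ℝ) + 1 - j) * EE 2 d j n) := by
    intro j _; push_cast; ring
  rw [Finset.sum_congr rfl this]; push_cast; ring

lemma stuffle_zero (s n : ℕ) : HH s n = XX s 0 n := by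
  induction n with
  | zero => simp [HH, XX_at_zero]
  | succ n ih => rw [HH_succ, XX_zero_succ, ih]

lemma stuffle_succ (s d : ℕ) : ∀ n, HH s n * TT (d + 1) n = XX s (d + 1) n + XX (s + 1) d n := by
  induction d with
  | zero =>
    intro n
    induction n with
    | zero => simp [XX_at_zero, TT_at_zero]
    | succ n ih =>
      rw [XX_succ, XX_zero_succ, HH_succ, TT_succ, TT_zero, ← stuffle_zero s n]
      linear_combination ih
  | succ d ihd =>
    intro n
    induction n with
    | zero => simp [XX_at_zero, TT_at_zero]
    | succ n ih =>
      rw [XX_succ, XX_succ, HH_succ, TT_succ (d + 1)]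
      linear_combination ih + (n : ℝ)⁻¹ * ihd n

noncomputable def DD (s d m : ℕ) : ℝ := ∑ n ∈ Finset.range m, TT d (n + 1) * (((m : ℝ) - n)⁻¹) ^ s

lemma DD_zero (s m : ℕ) : DD s 0 (m + 1) = DD s 0 m + (((m + 1 : ℕ) : ℝ)⁻¹) ^ s := by
  rw [DD, Finset.sum_range_succ', DD]; simp [TT_zero]

lemma DD_succ (s d m : ℕ) : DD s (d + 1) (m + 1) = DD s (d + 1) m +
    ∑ n ∈ Finset.range m, ((n : ℝ) + 1)⁻¹ * TT d (n + 1) * (((m : ℝ) - n)⁻¹) ^ s := by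
  rw [DD, Finset.sum_range_succ', DD]
  simp only [zero_add, TT_at_one, zero_mul, add_zero]
  rw [← Finset.sum_add_distrib]
  refine Finset.sum_congr rfl fun n _ => ?_
  rw [TT_succ d (n + 1)]; push_cast
  rw [show (m : ℝ) + 1 - (n + 1) = m - n by ring]; ring

lemma TT_sum (d m : ℕ) : TT (d + 1) (m + 1) = ∑ n ∈ Finset.range m, ((n : ℝ) + 1)⁻¹ * TT d (n + 1) := by
  induction m with
  | zero => simp [TT_at_one]
  | succ m ih => rw [TT_succ, ih, Finset.sum_range_succ]; push_cast; ring

lemma pf1 (d m : ℕ) : ∑ n ∈ Finset.range m, ((n : ℝ) + 1)⁻¹ * TT d (n + 1) * (((m : ℝ) - n)⁻¹) ^ 1 =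
    ((m + 1 : ℕ) : ℝ)⁻¹ * (TT (d + 1) (m + 1) + DD 1 d m) := by
  rw [TT_sum, DD, ← Finset.sum_add_distrib, Finset.mul_sum]
  refine Finset.sum_congr rfl fun n hn => ?_
  have h1 : (m : ℝ) - n ≠ 0 := by
    have : (n : ℝ) < m := by exact_mod_cast Finset.mem_range.mp hn
    linarith
  have h2 : (n : ℝ) + 1 ≠ 0 := by positivity
  have h3 : (m : ℝ) + 1 ≠ 0 := by positivity
  push_cast; field_simp; ring

lemma pf2 (d m : ℕ) : ∑ n ∈ Finset.range m, ((n : ℝ) + 1)⁻¹ * TT d (n + 1) * (((m : ℝ) - n)⁻¹) ^ 2 =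
    ((m + 1 : ℕ) : ℝ)⁻¹ * (DD 2 d m + ∑ n ∈ Finset.range m, ((n : ℝ) + 1)⁻¹ * TT d (n + 1) * (((m : ℝ) - n)⁻¹) ^ 1) := by
  rw [DD, ← Finset.sum_add_distrib, Finset.mul_sum]
  refine Finset.sum_congr rfl fun n hn => ?_
  have h1 : (m : ℝ) - n ≠ 0 := by
    have : (n : ℝ) < m := by exact_mod_cast Finset.mem_range.mp hn
    linarith
  have h2 : (n : ℝ) + 1 ≠ 0 := by positivity
  have h3 : (m : ℝ) + 1 ≠ 0 := by positivity
  push_cast; field_simp; ring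

lemma DD_one (d : ℕ) : ∀ m, DD 1 d m = ((d : ℝ) + 1) * TT (d + 1) (m + 1) := by
  induction d with
  | zero =>
    intro m
    induction m with
    | zero => simp [DD, TT_at_one]
    | succ m ih => rw [DD_zero, ih, TT_succ 0 (m + 1), TT_zero]; simp
  | succ d ihd =>
    intro m
    induction m with
    | zero => simp [DD, TT_at_one]
    | succ m ih => rw [DD_succ, pf1, ih, ihd, TT_succ (d + 1) (m + 1)]; push_cast; ring

lemma WW_at_one (d : ℕ) : WW d 1 = 0 := by
  rcases d with _ | d
  · have := WW_zero_succ 0; simpa [WW_at_zero] using this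
  · have := WW_succ d 0; simpa [WW_at_zero] using this

lemma DD_two (d : ℕ) : ∀ m, DD 2 d m = WW d (m + 1) := by
  induction d with
  | zero =>
    intro m
    induction m with
    | zero => simp [DD, WW_at_one]
    | succ m ih => rw [DD_zero, ih, WW_zero_succ (m + 1)]
  | succ d ihd =>
    intro m
    induction m with
    | zero => simp [DD, WW_at_one]
    | succ m ih => rw [DD_succ, pf2, pf1, ih, ihd, DD_one, WW_succ d (m + 1)]; push_cast; ring

lemma KK (x y : ℝ) (p : ℕ) : (y - x) ^ 2 * (∑ j ∈ Finset.range p, (j : ℝ) * (x ^ (p - 1 - j) * y ^ j)) =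
    p * y ^ p * (y - x) - y * (y ^ p - x ^ p) := by
  induction p with
  | zero => simp
  | succ p ih =>
    have : ∑ j ∈ Finset.range (p + 1), (j : ℝ) * (x ^ (p + 1 - 1 - j) * y ^ j) =
        x * (∑ j ∈ Finset.range p, (j : ℝ) * (x ^ (p - 1 - j) * y ^ j)) + p * y ^ p := by
      rw [Finset.sum_range_succ, Finset.mul_sum]
      congr 1
      · refine Finset.sum_congr rfl fun j hj => ?_
        have := Finset.mem_range.mp hj
        rw [show p + 1 - 1 - j = (p - 1 - j) + 1 by omega]; ring
      · simp
    rw [this, mul_add]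
    push_cast
    linear_combination x * ih

lemma SS (x y z : ℝ) (hxy : y - x ≠ 0) (hz : z * (y - x) = x * y) (p : ℕ) :
    ∑ a ∈ Finset.Icc 2 (p + 1), (((p + 2 - a : ℕ) : ℝ) - 1) * (x ^ a * y ^ (p + 2 - a)) =
     p * (y ^ (p + 1) * (z - x)) - y ^ p * (z ^ 2 - x ^ 2) - x ^ 2 * y ^ p + x ^ p * z ^ 2 := by
  have h1 : ∑ a ∈ Finset.Icc 2 (p + 1), (((p + 2 - a : ℕ) : ℝ) - 1) * (x ^ a * y ^ (p + 2 - a)) =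
      x ^ 2 * y * ∑ j ∈ Finset.range p, (j : ℝ) * (x ^ (p - 1 - j) * y ^ j) := by
    rw [← Finset.sum_range_reflect, ← Finset.Ico_add_one_right_eq_Icc, Finset.sum_Ico_eq_sum_range, Finset.mul_sum]
    refine Finset.sum_congr (by congr 1) fun i hi => ?_
    have := Finset.mem_range.mp hi
    have e1 : p + 2 - (2 + i) = (p - 1 - i) + 1 := by omega
    have e2 : p - 1 - (p - 1 - i) = i := by omega
    rw [e1, e2]; push_cast; ring
  rw [h1]
  have h2 := KK x y p
  have hz' : z = x * y / (y - x) := by rw [eq_div_iff hxy, hz]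
  apply mul_left_cancel₀ (pow_ne_zero 2 hxy)
  have : (y - x) ^ 2 * (x ^ 2 * y * ∑ j ∈ Finset.range p, (j : ℝ) * (x ^ (p - 1 - j) * y ^ j)) = x ^ 2 * y * (p * y ^ p * (y - x) - y * (y ^ p - x ^ p)) := by
    rw [← h2]; ring
  rw [this, hz']
  field_simp
  ring

/-! Infinite sums -/

lemma hs_congr {f g : ℕ → ℝ} {a : ℝ} (h : ∀ n, f n = g n) : HasSum f a ↔ HasSum g a := by
  rw [funext h]

lemma teles_step (s n : ℕ) (hs : 1 ≤ s) :
    HasSum (fun r : ℕ => (((n : ℝ) + r + 1)⁻¹) ^ s - ((((n + 1 : ℕ) : ℝ) + r + 1)⁻¹) ^ s)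
      ((((n + 1 : ℕ) : ℝ)⁻¹) ^ s) := by
  rw [hasSum_iff_tendsto_nat_of_nonneg]
  · have : ∀ N : ℕ, ∑ r ∈ Finset.range N, ((((n : ℝ) + r + 1)⁻¹) ^ s - ((((n + 1 : ℕ) : ℝ) + r + 1)⁻¹) ^ s) =
        (((n + 1 : ℕ) : ℝ)⁻¹) ^ s - (((n : ℝ) + N + 1)⁻¹) ^ s := by
      intro N
      have := Finset.sum_range_sub' (fun r : ℕ => (((n : ℝ) + r + 1)⁻¹) ^ s) N
      convert this using 1
      · refine Finset.sum_congr rfl fun r _ => ?_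
        push_cast
        rw [show (n : ℝ) + 1 + r + 1 = n + (r + 1) + 1 by ring]
      · simp
    simp_rw [this]
    have h0 : Filter.Tendsto (fun N : ℕ => (((n : ℝ) + N + 1)⁻¹) ^ s) Filter.atTop (nhds 0) := by
      have : Filter.Tendsto (fun N : ℕ => ((n : ℝ) + N + 1)) Filter.atTop Filter.atTop := by
        refine Filter.tendsto_atTop_add_const_right _ _ (Filter.tendsto_atTop_add_const_left _ _ tendsto_natCast_atTop_atTop)
      have h := (this.inv_tendsto_atTop).pow s
      simpa [zero_pow (show s ≠ 0 by omega)] using h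
    simpa using h0.const_sub ((((n + 1 : ℕ) : ℝ)⁻¹) ^ s)
  · intro r
    rw [sub_nonneg]
    push_cast
    gcongr
    linarith

lemma teles (s n : ℕ) (hs : 1 ≤ s) :
    HasSum (fun r : ℕ => (((r : ℝ) + 1)⁻¹) ^ s - (((n : ℝ) + r + 1)⁻¹) ^ s) (HH s (n + 1)) := by
  induction n with
  | zero => simp [HH, zero_pow (show s ≠ 0 by omega)]
  | succ n ih =>
    rw [HH_succ]
    convert ih.add (teles_step s n hs) using 2
    ring

lemma swap_sum (c : ℕ → ℝ) (hc : ∀ n, 0 ≤ c n) (s : ℕ) (hs : 1 ≤ s) (V : ℝ)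
    (hV : HasSum (fun n => c n * HH s (n + 1)) V) :
    HasSum (fun m : ℕ => ∑ n ∈ Finset.range m, c n * ((((m : ℝ) - n)⁻¹) ^ s - ((m : ℝ)⁻¹) ^ s)) V := by
  set g : ℕ × ℕ → ℝ := fun x => c x.1 * ((((x.2 : ℝ) + 1)⁻¹) ^ s - (((x.1 : ℝ) + x.2 + 1)⁻¹) ^ s) with hg
  have hrow : ∀ n, HasSum (fun r => g (n, r)) (c n * HH s (n + 1)) := fun n => (teles s n hs).mul_left (c n)
  have hnn : 0 ≤ g := by
    intro x
    refine mul_nonneg (hc _) (sub_nonneg.mpr ?_)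
    gcongr
    have : (0 : ℝ) ≤ x.1 := by positivity
    linarith
  have hsum : Summable g := by
    rw [summable_prod_of_nonneg hnn]
    refine ⟨fun n => (hrow n).summable, ?_⟩
    simp_rw [(hrow _).tsum_eq]
    exact hV.summable
  have hgs : HasSum g V := by
    have := hsum.hasSum.prod_fiberwise hrow
    rw [hV.unique this]; exact hsum.hasSum
  have h2 : HasSum (fun m : ℕ => ∑ x ∈ Finset.HasAntidiagonal.antidiagonal m, g x) V := by
    have h3 := (Finset.HasAntidiagonal.sigmaAntidiagonalEquivProd (A := ℕ)).hasSum_iff.mpr hgs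
    refine h3.sigma fun m => ?_
    have := hasSum_fintype (fun b : Finset.HasAntidiagonal.antidiagonal m => g b)
    rw [Finset.sum_coe_sort (Finset.HasAntidiagonal.antidiagonal m) g] at this
    exact this
  rw [← hasSum_nat_add_iff' 1]
  simp only [Finset.range_one, Finset.sum_singleton, Finset.range_zero, Finset.sum_empty, sub_zero]
  refine (hs_congr fun m => ?_).mpr h2
  rw [Finset.Nat.sum_antidiagonal_eq_sum_range_succ_mk]
  refine Finset.sum_congr rfl fun n hn => ?_
  have hn' : n ≤ m := by have := Finset.mem_range.mp hn; omega
  simp only [hg]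
  push_cast [Nat.cast_sub hn']
  rw [show (m : ℝ) + 1 - n = m - n + 1 by ring, show (n : ℝ) + (m - n) + 1 = m + 1 by ring]

noncomputable def XP (s d n : ℕ) : ℝ := ∑ j ∈ Finset.range d, ZZ d (fun i => if i = j then s else 1) n

lemma stuffle (s d n : ℕ) : HH s n * TT d n = XX s d n + XP (s + 1) d n := by
  rcases d with _ | d
  · simp [TT_zero, XP, stuffle_zero]
  · exact stuffle_succ s d n

lemma pointwise (p d m : ℕ) (hp : 2 ≤ p) :
    ∑ a ∈ Finset.Icc 2 (p + 1), (((p + 2 - a : ℕ) : ℝ) - 1) *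
      (((m : ℝ)⁻¹) ^ a * ∑ n ∈ Finset.range m, ((n : ℝ)⁻¹) ^ (p + 2 - a) * TT d n) =
    p * (∑ n ∈ Finset.range m, (((n : ℝ)⁻¹) ^ (p + 1) * TT d n) * ((((m : ℝ) - n)⁻¹) ^ 1 - ((m : ℝ)⁻¹) ^ 1))
    - (∑ n ∈ Finset.range m, (((n : ℝ)⁻¹) ^ p * TT d n) * ((((m : ℝ) - n)⁻¹) ^ 2 - ((m : ℝ)⁻¹) ^ 2))
    - ((m : ℝ)⁻¹) ^ 2 * (∑ n ∈ Finset.range m, ((n : ℝ)⁻¹) ^ p * TT d n)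
    + ((m : ℝ)⁻¹) ^ p * WW d m := by
  rcases m with _ | m
  · simp [WW_at_zero]
  have hW : WW d (m + 1) = ∑ n ∈ Finset.range (m + 1), if n = 0 then 0 else
      TT d n * ((((m + 1 : ℕ) : ℝ) - n)⁻¹) ^ 2 := by
    rw [← DD_two, DD, Finset.sum_range_succ']
    simp
  rw [hW]
  simp only [Finset.mul_sum]
  rw [Finset.sum_comm, ← Finset.sum_sub_distrib, ← Finset.sum_sub_distrib, ← Finset.sum_add_distrib]
  refine Finset.sum_congr rfl fun n hn => ?_
  have hnm := Finset.mem_range.mp hn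
  rcases Nat.eq_zero_or_pos n with h0 | h0
  · subst h0
    simp only [Nat.cast_zero, inv_zero, if_true]
    rw [zero_pow (by omega), zero_pow (by omega), Finset.sum_eq_zero]
    · simp
    · intro a ha
      have := Finset.mem_Icc.mp ha
      rw [zero_pow (by omega)]; simp
  · rw [if_neg (by omega)]
    have hn0 : (n : ℝ) ≠ 0 := by positivity
    have hm0 : ((m + 1 : ℕ) : ℝ) ≠ 0 := by positivity
    have hlt : (n : ℝ) < ((m + 1 : ℕ) : ℝ) := by exact_mod_cast hnm
    have hd : ((m + 1 : ℕ) : ℝ) - n ≠ 0 := by linarith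
    have hyx : (n : ℝ)⁻¹ - (((m + 1 : ℕ) : ℝ))⁻¹ ≠ 0 := by
      rw [sub_ne_zero]; intro h; rw [inv_inj] at h; linarith
    have hz : (((m + 1 : ℕ) : ℝ) - n)⁻¹ * ((n : ℝ)⁻¹ - (((m + 1 : ℕ) : ℝ))⁻¹) =
        (((m + 1 : ℕ) : ℝ))⁻¹ * (n : ℝ)⁻¹ := by
      field_simp
    have h := SS _ _ _ hyx hz p
    have h2 : ∑ a ∈ Finset.Icc 2 (p + 1), (((p + 2 - a : ℕ) : ℝ) - 1) * ((((m + 1 : ℕ) : ℝ)⁻¹) ^ a * (((n : ℝ)⁻¹) ^ (p + 2 - a) * TT d n)) =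
      TT d n * ∑ a ∈ Finset.Icc 2 (p + 1), (((p + 2 - a : ℕ) : ℝ) - 1) * ((((m + 1 : ℕ) : ℝ)⁻¹) ^ a * ((n : ℝ)⁻¹) ^ (p + 2 - a)) := by
      rw [Finset.mul_sum]; exact Finset.sum_congr rfl fun a _ => by ring
    rw [h2, h]; ring

lemma main_aux (p d : ℕ) (hp : 2 ≤ p) :
    (∑ a ∈ Finset.Icc 2 (p + 1), (((p + 2 - a : ℕ) : ℝ) - 1) *
        mzv (fun n : Fin (d + 2) =>
          if (n : ℕ) = 0 then a else if (n : ℕ) = 1 then p + 2 - a else 1))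
    =
    ((p : ℝ) - 1) * mzv (fun n : Fin (d + 1) => if (n : ℕ) = 0 then p + 2 else 1)
    - mzv (fun n : Fin (d + 2) => if (n : ℕ) = 0 then 2 else if (n : ℕ) = 1 then p else 1)
    + (p : ℝ) * ((d : ℝ) + 1) * mzv (fun n : Fin (d + 2) => if (n : ℕ) = 0 then p + 1 else 1)
    + ∑ j ∈ Finset.range d,
        ((p : ℝ) * mzv (fun n : Fin (d + 1) =>
            if (n : ℕ) = 0 then p + 1 else if (n : ℕ) = j + 1 then 2 else 1)
         - mzv (fun n : Fin (d + 1) =>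
            if (n : ℕ) = 0 then p else if (n : ℕ) = j + 1 then 3 else 1)
         + ((d - j : ℕ) : ℝ) *
            mzv (fun n : Fin (d + 2) =>
              if (n : ℕ) = 0 then p else if (n : ℕ) = j + 1 then 2 else 1)) := by
  have G1 : ∀ a b, 2 ≤ a → 1 ≤ b → HasSum (fun m : ℕ => ((m : ℝ)⁻¹) ^ a * ∑ n ∈ Finset.range m, ((n : ℝ)⁻¹) ^ b * TT d n)
      (mzv (fun n : Fin (d + 2) => if (n : ℕ) = 0 then a else if (n : ℕ) = 1 then b else 1)) := by
    intro a b ha hb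
    have := mzv_hasSum (d + 1) (fun n => if n = 0 then a else if n = 1 then b else 1)
      (fun i => by split_ifs <;> omega) (by simpa using ha)
    simpa [ZZ_def, TT] using this
  have G2 : ∀ a e, 2 ≤ a → HasSum (fun n : ℕ => ((n : ℝ)⁻¹) ^ a * TT e n)
      (mzv (fun n : Fin (e + 1) => if (n : ℕ) = 0 then a else 1)) := by
    intro a e ha
    have := mzv_hasSum e (fun n => if n = 0 then a else 1)
      (fun i => by split_ifs <;> omega) (by simpa using ha)
    simpa [TT] using this
  have G3 : ∀ a b e j, 2 ≤ a → 1 ≤ b → HasSum (fun n : ℕ => ((n : ℝ)⁻¹) ^ a * ZZ e (fun i => if i = j then b else 1) n)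
      (mzv (fun n : Fin (e + 1) => if (n : ℕ) = 0 then a else if (n : ℕ) = j + 1 then b else 1)) := by
    intro a b e j ha hb
    have := mzv_hasSum e (fun n => if n = 0 then a else if n = j + 1 then b else 1)
      (fun i => by split_ifs <;> omega) (by simpa using ha)
    simpa using this
  have hL := hasSum_sum (s := Finset.Icc 2 (p + 1)) (fun a ha =>
    (G1 a (p + 2 - a) (Finset.mem_Icc.mp ha).1 (by have := Finset.mem_Icc.mp ha; omega)).mul_left
      (((p + 2 - a : ℕ) : ℝ) - 1))
  have hF := G1 2 p le_rfl (by omega)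
  have hU := G2 (p + 2) d (by omega)
  have hQ := G2 (p + 1) (d + 1) (by omega)
  have hB := hasSum_sum (s := Finset.range d) (fun j _ => G3 (p + 1) 2 d j (by omega) (by omega))
  have hC := hasSum_sum (s := Finset.range d) (fun j _ => G3 p 3 d j (by omega) (by omega))
  have hE := hasSum_sum (s := Finset.range (d + 1)) (fun j _ => G3 p 2 (d + 1) j (by omega) (by omega))
  have hW := hasSum_sum (s := Finset.range (d + 1)) (fun j _ =>
    (G3 p 2 (d + 1) j (by omega) (by omega)).mul_left ((d : ℝ) + 1 - j))
  have hV1 := swap_sum (fun n => ((n : ℝ)⁻¹) ^ (p + 1) * TT d n)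
    (fun n => mul_nonneg (by positivity) (TT_nonneg _ _)) 1 le_rfl _
    ((hs_congr (fun n => by
      rw [HH_succ, ← Finset.mul_sum]
      have := stuffle 1 d n
      simp only [XX, EE_one, XP, Finset.sum_const, Finset.card_range, nsmul_eq_mul] at this
      push_cast at this
      linear_combination ((n : ℝ)⁻¹) ^ (p + 1) * this)).mpr (hU.add ((hQ.mul_left ((d : ℝ) + 1)).add hB)))
  have hV2 := swap_sum (fun n => ((n : ℝ)⁻¹) ^ p * TT d n)
    (fun n => mul_nonneg (by positivity) (TT_nonneg _ _)) 2 (by norm_num) _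
    ((hs_congr (fun n => by
      rw [HH_succ, ← Finset.mul_sum, ← Finset.mul_sum]
      have := stuffle 2 d n
      simp only [XX, EE, XP] at this
      linear_combination ((n : ℝ)⁻¹) ^ p * this)).mpr (hU.add (hE.add hC)))
  have hR := (((hV1.mul_left (p : ℝ)).sub hV2).sub hF).add hW
  have hLR := hL.unique ((hs_congr (fun m => by
    rw [pointwise p d m hp, WW]
    congr 1
    rw [Finset.mul_sum]
    exact Finset.sum_congr rfl fun j _ => by rw [EE]; ring)).mpr hR)
  rw [hLR]
  rw [Finset.sum_add_distrib, Finset.sum_sub_distrib, ← Finset.mul_sum, Finset.sum_range_succ, Finset.sum_range_succ]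
  have hfin : ∀ M : ℕ → ℝ, ∑ j ∈ Finset.range d, ((d - j : ℕ) : ℝ) * M j =
      ∑ j ∈ Finset.range d, ((d : ℝ) + 1 - j) * M j - ∑ j ∈ Finset.range d, M j := by
    intro M
    rw [← Finset.sum_sub_distrib]
    refine Finset.sum_congr rfl fun j hj => ?_
    rw [Nat.cast_sub (Finset.mem_range.mp hj).le]; ring
  rw [hfin]
  ring

theorem weighted_sum_ab_ones_b (u d : ℕ) (hu : 4 ≤ u)
    (q p : ℕ) (hq : q = u - 1) (hp : p = u - 2) :
    -- Σ_{a+b=u, a≥2, b≥1} (b−1)·ζ(a,b,1_d)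
    (∑ a ∈ Finset.Icc 2 (u - 1), (((u - a : ℕ) : ℝ) - 1) *
        mzv (fun n : Fin (d + 2) =>
          if (n : ℕ) = 0 then a else if (n : ℕ) = 1 then u - a else 1))
    =
    ((p : ℝ) - 1) * mzv (fun n : Fin (d + 1) => if (n : ℕ) = 0 then u else 1)
    - mzv (fun n : Fin (d + 2) => if (n : ℕ) = 0 then 2 else if (n : ℕ) = 1 then p else 1)
    + (p : ℝ) * ((d : ℝ) + 1) * mzv (fun n : Fin (d + 2) => if (n : ℕ) = 0 then q else 1)
    + ∑ j ∈ Finset.range d,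
        ((p : ℝ) * mzv (fun n : Fin (d + 1) =>
            if (n : ℕ) = 0 then q else if (n : ℕ) = j + 1 then 2 else 1)
         - mzv (fun n : Fin (d + 1) =>
            if (n : ℕ) = 0 then p else if (n : ℕ) = j + 1 then 3 else 1)
         + ((d - j : ℕ) : ℝ) *
            mzv (fun n : Fin (d + 2) =>
              if (n : ℕ) = 0 then p else if (n : ℕ) = j + 1 then 2 else 1)) := by
  obtain ⟨v, rfl⟩ : ∃ v, u = v + 2 := ⟨u - 2, by omega⟩
  obtain rfl : p = v := by omega
  obtain rfl : q = p + 1 := by omega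
  exact main_aux p d (by omega)
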